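/- In the quantum Borel algebra 𝒪_q(B⁺) of type SO_n the following column relations hold: (i) z_{sj} z_{tj} = q^{−1} z_{tj} z_{sj} whenever t < s ≤ j ≤ n, s ≠ t', and (if n is odd) j ≠ n₀; (ii) z_{t'j} z_{tj} = q^{−2} z_{tj} z_{t'j} − (q − q^{−1}) Σ_{r=j'}^{t−1} q^{r−t−1} z_{rj} z_{r'j} whenever t < t' ≤ j; (iii) if n is odd, z_{n₀ j} z_{tj} = q^{−1} z_{tj} z_{n₀ j} for all t < n₀ < j. -/

import Mathlib

noncomputable section
open scoped TensorProduct

namespace SOq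

/-- `pr n k = n + 1 - k`, the "primed" index `k'`. -/
def pr (n k : ℕ) : ℕ := n + 1 - k

/-- `2 ρ_i` as an integer. -/
def twoRho (n i : ℕ) : ℤ :=
  if 2 * i < n + 1 then (n : ℤ) - 2 * i
  else if 2 * i = n + 1 then 0
  else (n : ℤ) + 2 - 2 * i

/-- Entries of the matrix `J`: `c_{ij} = δ_{j,i'} q^{-ρ_i}` (with `q^{1/2} := v`). -/
def Jc (n : ℕ) (v : ℂ) (i j : ℕ) : ℂ :=
  if j = pr n i then v ^ (-(twoRho n i)) else 0

/-- R-matrix coefficients `R^{ij}_{ab}`. -/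
def Rc (n : ℕ) (q v : ℂ) (i j a b : ℕ) : ℂ :=
  q ^ (((if i = j then 1 else 0) - (if i = pr n j then 1 else 0) : ℤ)) *
      (if i = a then (1 : ℂ) else 0) * (if j = b then (1 : ℂ) else 0) +
    (if a < i then (1 : ℂ) else 0) * (q - q⁻¹) *
      ((if j = a then (1 : ℂ) else 0) * (if i = b then (1 : ℂ) else 0) -
        Jc n v j i * Jc n v a b)

/-- The free algebra on the generators `z_{ij}`. -/
abbrev FA : Type := FreeAlgebra ℂ (ℕ × ℕ)

def zf (i j : ℕ) : FA := FreeAlgebra.ι ℂ (i, j)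

/-- The FRT relation element `FRT(i,b,j,a)`. -/
def frtRel (n : ℕ) (q v : ℂ) (i b j a : ℕ) : FA :=
  ∑ k ∈ Finset.Icc 1 n, ∑ l ∈ Finset.Icc 1 n,
    (Rc n q v l k a b • (zf i k * zf j l) - Rc n q v j i k l • (zf k a * zf l b))

/-- Entry `(i,j)` of `z J zᵗ J⁻¹ - Id` (note `J⁻¹ = J`). -/
def orthRel₁ (n : ℕ) (v : ℂ) (i j : ℕ) : FA :=
  (∑ k ∈ Finset.Icc 1 n, ∑ l ∈ Finset.Icc 1 n, ∑ m ∈ Finset.Icc 1 n,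
      (Jc n v k l * Jc n v m j) • (zf i k * zf m l)) - (if i = j then (1 : FA) else 0)

/-- Entry `(i,j)` of `J zᵗ J⁻¹ z - Id`. -/
def orthRel₂ (n : ℕ) (v : ℂ) (i j : ℕ) : FA :=
  (∑ k ∈ Finset.Icc 1 n, ∑ l ∈ Finset.Icc 1 n, ∑ m ∈ Finset.Icc 1 n,
      (Jc n v i k * Jc n v l m) • (zf l k * zf m j)) - (if i = j then (1 : FA) else 0)

/-- The defining relations of the quantum Borel algebra `𝒪_q(B⁺) ⊆ 𝒪_q(SO_n)`. -/
inductive Rel (n : ℕ) (q v : ℂ) : FA → FA → Prop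
  | frt : ∀ i b j a : ℕ, i ∈ Finset.Icc 1 n → b ∈ Finset.Icc 1 n → j ∈ Finset.Icc 1 n →
      a ∈ Finset.Icc 1 n → Rel n q v (frtRel n q v i b j a) 0
  | orth₁ : ∀ i j : ℕ, i ∈ Finset.Icc 1 n → j ∈ Finset.Icc 1 n →
      Rel n q v (orthRel₁ n v i j) 0
  | orth₂ : ∀ i j : ℕ, i ∈ Finset.Icc 1 n → j ∈ Finset.Icc 1 n →
      Rel n q v (orthRel₂ n v i j) 0
  | lower : ∀ i j : ℕ, j < i → Rel n q v (zf i j) 0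
  | out : ∀ i j : ℕ, (i = 0 ∨ j = 0 ∨ n < i ∨ n < j) → Rel n q v (zf i j) 0

/-- The quantum Borel algebra `𝒪_q(B⁺)`. -/
abbrev OB (n : ℕ) (q v : ℂ) : Type := RingQuot (Rel n q v)

/-- The generators `z_{ij}` of `𝒪_q(B⁺)`. -/
def z (n : ℕ) (q v : ℂ) (i j : ℕ) : OB n q v :=
  RingQuot.mkAlgHom ℂ (Rel n q v) (zf i j)

end SOq

namespace SOq

/-!
Take the FRT relation for two rows `i > j` and a single column `m ≠ m'`. On the column side
`c_{mm} = 0` leaves only `q z_{im} z_{jm}`. On the row side the exchange term carries the factor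
`u(j - i) = 0`, so what remains is `z_{jm} z_{im}` (with coefficient `q⁻¹` if `i = j'` and `1`
otherwise) and a multiple of `c_{ij} ∑_{k < j} c_{kk'} z_{km} z_{k'm}`. The latter vanishes unless
`i = j'`, and triangularity of `z` kills its terms with `k' > m`.
-/

section Indices

variable {n k : ℕ}

lemma pr_mem_Icc (hk : k ∈ Finset.Icc 1 n) : pr n k ∈ Finset.Icc 1 n := by
  simp only [Finset.mem_Icc, pr] at *
  omega

lemma pr_pr (hk : k ≤ n + 1) : pr n (pr n k) = k := by
  simp only [pr]
  omega

lemma twoRho_of_lt (hk : k < pr n k) : twoRho n k = n - 2 * k :=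
  if_pos (by simp only [pr] at hk; omega)

lemma twoRho_pr (hk : k ≤ n + 1) : twoRho n (pr n k) = -twoRho n k := by
  simp only [twoRho, pr]
  split_ifs <;> omega

end Indices

section Coefficients

variable {n : ℕ} {q v : ℂ}

lemma Jc_of_ne {i j : ℕ} (h : j ≠ pr n i) : Jc n v i j = 0 :=
  if_neg h

lemma Jc_pr_right (i : ℕ) : Jc n v i (pr n i) = v ^ (-twoRho n i) :=
  if_pos rfl

lemma Jc_pr_left {i : ℕ} (hi : i ≤ n + 1) : Jc n v (pr n i) i = v ^ twoRho n i := by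
  rw [Jc, if_pos (pr_pr hi).symm, twoRho_pr hi, neg_neg]

lemma Jc_self {m : ℕ} (hm : 2 * m ≠ n + 1) : Jc n v m m = 0 :=
  Jc_of_ne (by simp only [pr]; omega)

lemma Jc_pr_left_mul_Jc_pr_right (hv0 : v ≠ 0) (hv : v ^ 2 = q) {t k : ℕ}
    (ht : t < pr n t) (hk : k < pr n k) :
    Jc n v (pr n t) t * Jc n v k (pr n k) = q ^ ((k : ℤ) - t) := by
  have htn : t ≤ n + 1 := ht.le.trans (Nat.sub_le _ _)
  rw [Jc_pr_left htn, Jc_pr_right, twoRho_of_lt ht, twoRho_of_lt hk, ← zpow_add₀ hv0, ← hv,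
    ← zpow_natCast, ← zpow_mul]
  congr 1
  push_cast
  ring

variable {M : Type*} [AddCommGroup M] [Module ℂ M]

lemma sum_sum_Jc_smul (f : ℕ → ℕ → M) :
    ∑ k ∈ Finset.Icc 1 n, ∑ l ∈ Finset.Icc 1 n, Jc n v k l • f k l =
      ∑ k ∈ Finset.Icc 1 n, Jc n v k (pr n k) • f k (pr n k) :=
  Finset.sum_congr rfl fun _ hk ↦ Finset.sum_eq_single_of_mem _ (pr_mem_Icc hk) fun _ _ hl ↦ by
    rw [Jc_of_ne hl, zero_smul]

lemma Rc_smul (i j a b : ℕ) (x : M) :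
    Rc n q v i j a b • x =
      q ^ (((if i = j then 1 else 0) - (if i = pr n j then 1 else 0) : ℤ)) •
          (if i = a then if j = b then x else 0 else 0) +
        (q - q⁻¹) • ((if j = a then if i = b then if a < i then x else 0 else 0 else 0) -
          Jc n v j i • if a < i then Jc n v a b • x else 0) := by
  have hRc : Rc n q v i j a b =
      q ^ (((if i = j then 1 else 0) - (if i = pr n j then 1 else 0) : ℤ)) *
          (if i = a then if j = b then 1 else 0 else 0) +
        (q - q⁻¹) * ((if j = a then if i = b then if a < i then 1 else 0 else 0 else 0) -
          Jc n v j i * if a < i then Jc n v a b else 0) := by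
    simp only [Rc, mul_ite, ite_mul, mul_one, one_mul, mul_zero, zero_mul]
    split_ifs <;> ring
  simp only [hRc, add_smul, sub_smul, mul_smul, smul_sub, ite_smul, one_smul, zero_smul]

lemma sum_Rc_upper_smul {i j : ℕ} (hi : i ∈ Finset.Icc 1 n) (hj : j ∈ Finset.Icc 1 n)
    (f : ℕ → ℕ → M) :
    ∑ k ∈ Finset.Icc 1 n, ∑ l ∈ Finset.Icc 1 n, Rc n q v j i k l • f k l =
      q ^ (((if j = i then 1 else 0) - (if j = pr n i then 1 else 0) : ℤ)) • f j i +
        (q - q⁻¹) • ((if i < j then f i j else 0) -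
          Jc n v i j • ∑ k ∈ Finset.Ico 1 j, Jc n v k (pr n k) • f k (pr n k)) := by
  have hfilter : {k ∈ Finset.Icc 1 n | k < j} = Finset.Ico 1 j := by
    ext k
    simp only [Finset.mem_filter, Finset.mem_Icc, Finset.mem_Ico] at *
    omega
  have hsum : ∑ k ∈ Finset.Icc 1 n, ∑ l ∈ Finset.Icc 1 n,
      (if k < j then Jc n v k l • f k l else 0) =
        ∑ k ∈ Finset.Ico 1 j, Jc n v k (pr n k) • f k (pr n k) := by
    simp only [← smul_ite_zero, sum_sum_Jc_smul fun k l ↦ if k < j then f k l else 0]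
    simp only [smul_ite_zero, ← Finset.sum_filter, hfilter]
  simp only [Rc_smul, Finset.sum_add_distrib, Finset.sum_sub_distrib, ← Finset.smul_sum, hsum]
  simp only [Finset.sum_ite_irrel, Finset.sum_const_zero, Finset.sum_ite_eq, hi, hj, if_true]

lemma sum_Rc_lower_smul {a b : ℕ} (ha : a ∈ Finset.Icc 1 n) (hb : b ∈ Finset.Icc 1 n)
    (f : ℕ → ℕ → M) :
    ∑ k ∈ Finset.Icc 1 n, ∑ l ∈ Finset.Icc 1 n, Rc n q v l k a b • f k l =
      q ^ (((if a = b then 1 else 0) - (if a = pr n b then 1 else 0) : ℤ)) • f b a +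
        (q - q⁻¹) • ((if a < b then f a b else 0) -
          Jc n v a b • ∑ k ∈ Finset.Ico 1 (pr n a), Jc n v k (pr n k) • f k (pr n k)) := by
  have hfilter : {k ∈ Finset.Icc 1 n | a < pr n k} = Finset.Ico 1 (pr n a) := by
    ext k
    simp only [Finset.mem_filter, Finset.mem_Icc, Finset.mem_Ico] at *
    simp only [pr]
    omega
  have hsum : ∑ k ∈ Finset.Icc 1 n, ∑ l ∈ Finset.Icc 1 n,
      Jc n v k l • (if a < l then Jc n v a b • f k l else 0) =
        Jc n v a b • ∑ k ∈ Finset.Ico 1 (pr n a), Jc n v k (pr n k) • f k (pr n k) := by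
    rw [sum_sum_Jc_smul fun k l ↦ if a < l then Jc n v a b • f k l else 0]
    simp only [smul_ite_zero, ← Finset.sum_filter, hfilter, Finset.smul_sum,
      smul_comm (Jc n v a b)]
  simp only [Rc_smul, Finset.sum_add_distrib, Finset.sum_sub_distrib, ← Finset.smul_sum, hsum]
  simp only [smul_ite_zero, Finset.sum_ite_irrel, Finset.sum_const_zero, Finset.sum_ite_eq', ha, hb,
    if_true]

end Coefficients

section Relations

variable {n : ℕ} {q v : ℂ}

lemma z_eq_zero_of_lt {i j : ℕ} (h : j < i) : z n q v i j = 0 := by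
  rw [z, RingQuot.mkAlgHom_rel ℂ (Rel.lower i j h), map_zero]

lemma frt_relation {i b j a : ℕ} (hi : i ∈ Finset.Icc 1 n) (hb : b ∈ Finset.Icc 1 n)
    (hj : j ∈ Finset.Icc 1 n) (ha : a ∈ Finset.Icc 1 n) :
    q ^ (((if a = b then 1 else 0) - (if a = pr n b then 1 else 0) : ℤ)) •
          (z n q v i b * z n q v j a) +
        (q - q⁻¹) • ((if a < b then z n q v i a * z n q v j b else 0) -
          Jc n v a b • ∑ k ∈ Finset.Ico 1 (pr n a),
            Jc n v k (pr n k) • (z n q v i k * z n q v j (pr n k))) =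
      q ^ (((if j = i then 1 else 0) - (if j = pr n i then 1 else 0) : ℤ)) •
          (z n q v j a * z n q v i b) +
        (q - q⁻¹) • ((if i < j then z n q v i a * z n q v j b else 0) -
          Jc n v i j • ∑ k ∈ Finset.Ico 1 j,
            Jc n v k (pr n k) • (z n q v k a * z n q v (pr n k) b)) := by
  have h := RingQuot.mkAlgHom_rel ℂ (Rel.frt (q := q) (v := v) i b j a hi hb hj ha)
  simp only [frtRel, map_sum, map_sub, map_smul, map_mul, map_zero, Finset.sum_sub_distrib,
    sub_eq_zero] at h
  rw [← sum_Rc_lower_smul ha hb fun k l ↦ z n q v i k * z n q v j l,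
    ← sum_Rc_upper_smul hi hj fun k l ↦ z n q v k a * z n q v l b]
  exact h

lemma frt_column {i j m : ℕ} (hj : 1 ≤ j) (hij : j < i) (hi : i ≤ n)
    (hm : m ∈ Finset.Icc 1 n) (hm' : 2 * m ≠ n + 1) :
    q • (z n q v i m * z n q v j m) =
      q ^ (-(if j = pr n i then 1 else 0) : ℤ) • (z n q v j m * z n q v i m) -
        ((q - q⁻¹) * Jc n v i j) • ∑ k ∈ Finset.Ico 1 j,
          Jc n v k (pr n k) • (z n q v k m * z n q v (pr n k) m) := by
  have h := frt_relation (q := q) (v := v) (Finset.mem_Icc.2 ⟨hj.trans hij.le, hi⟩) hm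
    (Finset.mem_Icc.2 ⟨hj, hij.le.trans hi⟩) hm
  have hmpr : m ≠ pr n m := by simp only [pr]; omega
  simpa only [if_true, if_neg hmpr, if_neg hij.ne, if_neg hij.not_gt, lt_irrefl, if_false,
    Jc_self hm', zero_smul, sub_zero, smul_zero, add_zero, zpow_one, zero_sub, smul_neg, mul_smul,
    ← sub_eq_add_neg] using h

lemma z_mul_z_of_ne_pr (hq0 : q ≠ 0) {t s j : ℕ} (ht : 1 ≤ t) (hts : t < s) (hsn : s ≤ n)
    (hs : s ≠ pr n t) (hj : j ∈ Finset.Icc 1 n) (hj' : 2 * j ≠ n + 1) :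
    z n q v s j * z n q v t j = q⁻¹ • (z n q v t j * z n q v s j) := by
  have hts' : t ≠ pr n s := by simp only [pr] at *; omega
  have h := frt_column (q := q) (v := v) ht hts hsn hj hj'
  rw [if_neg hts', Jc_of_ne hts', mul_zero, zero_smul, sub_zero, neg_zero, zpow_zero,
    one_smul] at h
  rw [← h, inv_smul_smul₀ hq0]

lemma sum_Ico_Jc_smul_column {j : ℕ} (t : ℕ) (hj : j ≤ n) :
    ∑ k ∈ Finset.Ico 1 t, Jc n v k (pr n k) • (z n q v k j * z n q v (pr n k) j) =
      ∑ k ∈ Finset.Ico (pr n j) t, Jc n v k (pr n k) • (z n q v k j * z n q v (pr n k) j) := by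
  symm
  refine Finset.sum_subset (Finset.Ico_subset_Ico_left (by simp only [pr]; omega)) ?_
  intro k hk hkj
  have hjk : j < pr n k := by simp only [Finset.mem_Ico, pr] at *; omega
  rw [z_eq_zero_of_lt hjk, mul_zero, smul_zero]

lemma z_pr_mul_z (hq0 : q ≠ 0) (hv : v ^ 2 = q) {t j : ℕ} (ht : 1 ≤ t) (htt : t < pr n t)
    (hj : j ∈ Finset.Icc 1 n) (hj' : 2 * j ≠ n + 1) :
    z n q v (pr n t) j * z n q v t j =
      (q ^ (-2 : ℤ)) • (z n q v t j * z n q v (pr n t) j) -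
        (q - q⁻¹) • ∑ r ∈ Finset.Ico (pr n j) t,
          (q ^ ((r : ℤ) - (t : ℤ) - 1)) • (z n q v r j * z n q v (pr n r) j) := by
  have hv0 : v ≠ 0 := by
    rintro rfl
    exact hq0 (by rw [← hv, zero_pow two_ne_zero])
  have ht_mem : t ∈ Finset.Icc 1 n := by simp only [Finset.mem_Icc, pr] at *; omega
  have ht'n : pr n t ≤ n := (Finset.mem_Icc.1 (pr_mem_Icc ht_mem)).2
  have h := frt_column (q := q) (v := v) ht htt ht'n hj hj'
  rw [if_pos (pr_pr (by simp only [pr] at *; omega)).symm,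
    sum_Ico_Jc_smul_column t (Finset.mem_Icc.1 hj).2, mul_smul, Finset.smul_sum] at h
  have hcoeff : ∀ r ∈ Finset.Ico (pr n j) t,
      Jc n v (pr n t) t • Jc n v r (pr n r) • (z n q v r j * z n q v (pr n r) j) =
        q • q ^ ((r : ℤ) - t - 1) • (z n q v r j * z n q v (pr n r) j) := by
    intro r hr
    have hrr : r < pr n r := by simp only [Finset.mem_Ico, pr] at *; omega
    rw [smul_smul, smul_smul, Jc_pr_left_mul_Jc_pr_right hv0 hv htt hrr, zpow_sub_one₀ hq0,
      mul_left_comm, mul_inv_cancel₀ hq0, mul_one]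
  rw [Finset.sum_congr rfl hcoeff, ← Finset.smul_sum, smul_comm _ q] at h
  rw [← inv_smul_smul₀ hq0 (z n q v (pr n t) j * z n q v t j), h, smul_sub,
    inv_smul_smul₀ hq0, smul_smul, ← zpow_neg_one, ← zpow_add₀ hq0]
  rfl

end Relations

/-- Column relations in the quantum Borel algebra `𝒪_q(B⁺)` of type `SO_n`. -/
theorem column_relations (n : ℕ) (hn : 3 ≤ n) (q v : ℂ) (hq0 : q ≠ 0) (hv : v ^ 2 = q) :
    (∀ t s j : ℕ, 1 ≤ t → t < s → s ≤ j → j ≤ n → s ≠ pr n t → 2 * j ≠ n + 1 →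
      z n q v s j * z n q v t j = q⁻¹ • (z n q v t j * z n q v s j)) ∧
    (∀ t j : ℕ, 1 ≤ t → t < pr n t → pr n t ≤ j → j ≤ n →
      z n q v (pr n t) j * z n q v t j =
        (q ^ (-2 : ℤ)) • (z n q v t j * z n q v (pr n t) j) -
          (q - q⁻¹) •
            ∑ r ∈ Finset.Ico (pr n j) t,
              (q ^ ((r : ℤ) - (t : ℤ) - 1)) • (z n q v r j * z n q v (pr n r) j)) ∧
    (Odd n → ∀ t j : ℕ, 1 ≤ t → t < (n + 1) / 2 → (n + 1) / 2 < j → j ≤ n →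
      z n q v ((n + 1) / 2) j * z n q v t j =
        q⁻¹ • (z n q v t j * z n q v ((n + 1) / 2) j)) := by
  refine ⟨fun t s j ht hts hsj hj hs hj' ↦ ?_, fun t j ht htt htj hj ↦ ?_, ?_⟩
  · exact z_mul_z_of_ne_pr hq0 ht hts (hsj.trans hj) hs (Finset.mem_Icc.2 ⟨by omega, hj⟩) hj'
  · have hj' : 2 * j ≠ n + 1 := by simp only [pr] at *; omega
    exact z_pr_mul_z hq0 hv ht htt (Finset.mem_Icc.2 ⟨by omega, hj⟩) hj'
  · rintro ⟨m, rfl⟩ t j ht htm hmj hj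
    exact z_mul_z_of_ne_pr hq0 ht htm (hmj.le.trans hj) (by simp only [pr]; omega)
      (Finset.mem_Icc.2 ⟨by omega, hj⟩) (by omega)

end SOq
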